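/- arXiv:2102.12931 — 3 statements merged into one kernel-verified Lean document; each statement's English description precedes it below -/
import Mathlib

section
/- Let G be a discrete groupoid. Then the set K_fin(G) of all finite local bisections of G, under the setwise product, is a Boolean inverse semigroup whose idempotents are exactly the finite subsets of the set of identities of G. -/
namespace Paper

/-- An inverse semigroup with zero: an associative multiplication, a zero that is
absorbing, and a map `⁻¹` sending each element to its unique generalized inverse. -/
class IsInverseSemigroup (S : Type*) [Mul S] [Zero S] [Inv S] : Prop where
  mul_assoc : ∀ a b c : S, a * b * c = a * (b * c)
  mul_inv_mul : ∀ a : S, a * a⁻¹ * a = a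
  inv_mul_inv : ∀ a : S, a⁻¹ * a * a⁻¹ = a⁻¹
  inv_unique : ∀ a b : S, a * b * a = a → b * a * b = b → b = a⁻¹
  zero_mul : ∀ a : S, 0 * a = 0
  mul_zero : ∀ a : S, a * 0 = 0

variable {S : Type*} [Mul S] [Zero S] [Inv S]

/-- The natural partial order: `a ≤ b` iff `a = b * a⁻¹ * a`. -/
def nle (a b : S) : Prop := a = b * a⁻¹ * a

/-- `e` is an idempotent. -/
def idem (e : S) : Prop := e * e = e

/-- `a` and `b` are compatible. -/
def compat (a b : S) : Prop := idem (a⁻¹ * b) ∧ idem (a * b⁻¹)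

/-- `a` and `b` are orthogonal. -/
def orth (a b : S) : Prop := a⁻¹ * b = 0 ∧ a * b⁻¹ = 0

/-- `j` is the least upper bound of `a` and `b` for the natural partial order. -/
def isJoin (a b j : S) : Prop :=
  nle a j ∧ nle b j ∧ ∀ c : S, nle a c → nle b c → nle j c

/-- `m` is the greatest lower bound of `a` and `b` for the natural partial order. -/
def isMeet (a b m : S) : Prop :=
  nle m a ∧ nle m b ∧ ∀ c : S, nle c a → nle c b → nle c m

/-- `a` is an atom: a nonzero element with nothing strictly between it and `0`. -/
def isAtomElem (a : S) : Prop := a ≠ 0 ∧ ∀ x : S, nle x a → x = a ∨ x = 0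

/-- `s` is the least upper bound of the finite family `f`. -/
def isJoinFin {m : ℕ} (f : Fin m → S) (s : S) : Prop :=
  (∀ i, nle (f i) s) ∧ ∀ c : S, (∀ i, nle (f i) c) → nle s c

/-- A Boolean inverse semigroup: a nonzero inverse semigroup with zero in which
compatible pairs have joins, multiplication distributes over binary compatible joins,
and the idempotents form a generalized Boolean algebra under the natural partial
order (meets of idempotents are automatically given by multiplication; the extra
requirement is the existence of relative complements). -/
class IsBooleanInverseSemigroup (S : Type*) [Mul S] [Zero S] [Inv S]
    extends IsInverseSemigroup S : Prop where
  exists_ne_zero : ∃ a : S, a ≠ 0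
  compat_join : ∀ a b : S, compat a b → ∃ j, isJoin a b j
  mul_join : ∀ a b j c : S, isJoin a b j → isJoin (c * a) (c * b) (c * j)
  join_mul : ∀ a b j c : S, isJoin a b j → isJoin (a * c) (b * c) (j * c)
  relcomp : ∀ e f : S, idem e → idem f → nle f e →
    ∃ g : S, idem g ∧ nle g e ∧ g * f = 0 ∧ isJoin f g e


open CategoryTheory

universe u v

/-- The elements of a (discrete) groupoid with object type `Ob`: arrows together
with their source and target. The source of an arrow is its domain `d` and the
target is its range `r` (so the product `x · y` is defined when `d(x) = r(y)`). -/
def Arr (Ob : Type u) [Groupoid.{v} Ob] : Type (max u v) := Σ (a b : Ob), a ⟶ b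

/-- `IsComp x y z` says that `x` and `y` are composable (`d(x) = r(y)`) with
product `x · y = z`. -/
def IsComp {Ob : Type u} [Groupoid.{v} Ob] (x y z : Arr Ob) : Prop :=
  ∃ (a b c : Ob) (g : a ⟶ b) (h : b ⟶ c),
    y = ⟨a, b, g⟩ ∧ x = ⟨b, c, h⟩ ∧ z = ⟨a, c, g ≫ h⟩

/-- A local bisection: elements with equal domains are equal, and elements with
equal ranges are equal. -/
def IsLocalBisection {Ob : Type u} [Groupoid.{v} Ob] (A : Set (Arr Ob)) : Prop :=
  ∀ x ∈ A, ∀ y ∈ A, (x.1 = y.1 → x = y) ∧ (x.2.1 = y.2.1 → x = y)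

/-- The setwise product of two subsets of a groupoid. -/
def setMul {Ob : Type u} [Groupoid.{v} Ob] (A B : Set (Arr Ob)) : Set (Arr Ob) :=
  {z | ∃ x ∈ A, ∃ y ∈ B, IsComp x y z}

/-- The inverse of a groupoid element. -/
def arrInv {Ob : Type u} [Groupoid.{v} Ob] (x : Arr Ob) : Arr Ob :=
  ⟨x.2.1, x.1, Groupoid.inv x.2.2⟩

/-- The setwise inverse of a subset of a groupoid. -/
def setInv {Ob : Type u} [Groupoid.{v} Ob] (A : Set (Arr Ob)) : Set (Arr Ob) :=
  arrInv '' A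

/-- The set of identities of the groupoid. -/
def identityArrs (Ob : Type u) [Groupoid.{v} Ob] : Set (Arr Ob) :=
  {x | ∃ a : Ob, x = ⟨a, a, 𝟙 a⟩}

/-- `K_fin(G)`: the finite local bisections of the groupoid. -/
def Kfin (Ob : Type u) [Groupoid.{v} Ob] : Type (max u v) :=
  {A : Set (Arr Ob) // A.Finite ∧ IsLocalBisection A}

/-!
The point is that everything can be read off underlying sets. The product `B A⁻¹ A` is the
restriction of `B` to the domains of elements of `A`, so the natural partial order is inclusion.
Comparing domains and ranges in `x = x₁ x₂` shows that an idempotent local bisection consists of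
idempotent arrows, which are identities. If `A⁻¹ B` and `A B⁻¹` consist of identities, then `A ∪ B`
is again a local bisection. Hence joins are unions and relative complements are set differences.
-/

section Groupoid

variable {Ob : Type u} [Groupoid.{v} Ob]

namespace Arr

/-- The domain `d(x)` of a groupoid element, as an object rather than an identity arrow. -/
abbrev dom (x : Arr Ob) : Ob := x.1

/-- The range `r(x)` of a groupoid element, as an object rather than an identity arrow. -/
abbrev ran (x : Arr Ob) : Ob := x.2.1

/-- The identity arrow at an object, as a groupoid element. -/
def id (a : Ob) : Arr Ob := ⟨a, a, 𝟙 a⟩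

theorem hom_eq_of_mk_eq {a b : Ob} {g h : a ⟶ b}
    (hgh : (⟨a, b, g⟩ : Arr Ob) = ⟨a, b, h⟩) : g = h := by
  cases hgh
  rfl

end Arr

theorem id_dom_eq_of_mem_identityArrs {x : Arr Ob} (hx : x ∈ identityArrs Ob) :
    Arr.id x.dom = x := by
  obtain ⟨a, rfl⟩ := hx
  rfl

theorem isComp_mk {a b c : Ob} (g : a ⟶ b) (h : b ⟶ c) :
    IsComp (⟨b, c, h⟩ : Arr Ob) ⟨a, b, g⟩ ⟨a, c, g ≫ h⟩ :=
  ⟨a, b, c, g, h, rfl, rfl, rfl⟩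

theorem exists_isComp_of_dom_eq_ran {x y : Arr Ob} (h : x.dom = y.ran) : ∃ z, IsComp x y z := by
  obtain ⟨b, c, k⟩ := x
  obtain ⟨a, _, g⟩ := y
  obtain rfl : b = _ := h
  exact ⟨_, isComp_mk g k⟩

theorem arrInv_involutive : Function.Involutive (arrInv : Arr Ob → Arr Ob) := by
  rintro ⟨a, b, f⟩
  change (⟨a, b, Groupoid.inv (Groupoid.inv f)⟩ : Arr Ob) = ⟨a, b, f⟩
  rw [Groupoid.inv_eq_inv, Groupoid.inv_eq_inv, IsIso.inv_inv]

theorem isComp_id_dom (x : Arr Ob) : IsComp x (Arr.id x.dom) x := by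
  obtain ⟨a, b, f⟩ := x
  simpa only [Arr.id, Category.id_comp] using isComp_mk (𝟙 a) f

theorem isComp_arrInv_self (x : Arr Ob) : IsComp (arrInv x) x (Arr.id x.dom) := by
  obtain ⟨a, b, f⟩ := x
  simpa only [Arr.id, arrInv, Groupoid.comp_inv] using isComp_mk f (Groupoid.inv f)

namespace IsComp

variable {x y z w : Arr Ob}

theorem dom_eq (h : IsComp x y z) : z.dom = y.dom := by
  obtain ⟨a, b, c, g, k, rfl, rfl, rfl⟩ := h
  rfl

theorem ran_eq (h : IsComp x y z) : z.ran = x.ran := by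
  obtain ⟨a, b, c, g, k, rfl, rfl, rfl⟩ := h
  rfl

theorem dom_eq_ran (h : IsComp x y z) : x.dom = y.ran := by
  obtain ⟨a, b, c, g, k, rfl, rfl, rfl⟩ := h
  rfl

theorem unique (hz : IsComp x y z) (hw : IsComp x y w) : z = w := by
  obtain ⟨a, b, c, g, k, rfl, rfl, rfl⟩ := hz
  obtain ⟨_, _, _, _, _, hy, hx, rfl⟩ := hw
  cases hy
  cases hx
  rfl

theorem eq_left_of_mem_identityArrs (h : IsComp x y z) (hy : y ∈ identityArrs Ob) : z = x := by
  obtain ⟨a, rfl⟩ := hy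
  obtain rfl : x.dom = a := h.dom_eq_ran
  exact h.unique (isComp_id_dom x)

theorem eq_id_of_eq_right (h : IsComp w y y) : w = Arr.id y.ran := by
  obtain ⟨a, b, c, g, k, rfl, rfl, hgk⟩ := h
  obtain rfl : b = c := congrArg Arr.ran hgk
  have hg : g = g ≫ k := Arr.hom_eq_of_mk_eq hgk
  have hk : k = 𝟙 b := by rw [← cancel_epi g, ← hg, Category.comp_id]
  rw [hk, Arr.id]

theorem eq_arrInv_of_eq_id {a : Ob} (h : IsComp x y (Arr.id a)) : x = arrInv y := by
  obtain ⟨a', b, c, g, k, rfl, rfl, hgk⟩ := h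
  obtain rfl : a = a' := congrArg Arr.dom hgk
  obtain rfl : a = c := congrArg Arr.ran hgk
  have hg : 𝟙 a = g ≫ k := Arr.hom_eq_of_mk_eq hgk
  have hk : k = Groupoid.inv g := by rw [← cancel_epi g, ← hg, Groupoid.comp_inv]
  rw [hk]
  rfl

theorem eq_arrInv_of_mem_identityArrs (h : IsComp x y z) (hz : z ∈ identityArrs Ob) :
    x = arrInv y := by
  obtain ⟨a, rfl⟩ := hz
  exact h.eq_arrInv_of_eq_id

end IsComp

theorem exists_isComp_assoc {x y z t : Arr Ob} :
    (∃ w, IsComp x y w ∧ IsComp w z t) ↔ ∃ s, IsComp y z s ∧ IsComp x s t := by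
  constructor
  · rintro ⟨_, ⟨a, b, c, g, k, rfl, rfl, rfl⟩, ⟨_, _, _, f, _, rfl, hw, rfl⟩⟩
    cases hw
    exact ⟨_, isComp_mk f g, by simpa only [Category.assoc] using isComp_mk (f ≫ g) k⟩
  · rintro ⟨_, ⟨a, b, c, f, g, rfl, rfl, rfl⟩, ⟨_, _, _, _, k, hs, rfl, rfl⟩⟩
    cases hs
    exact ⟨_, isComp_mk g k, by simpa only [Category.assoc] using isComp_mk f (g ≫ k)⟩

theorem setMul_assoc (A B C : Set (Arr Ob)) :
    setMul (setMul A B) C = setMul A (setMul B C) := by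
  ext t
  constructor
  · rintro ⟨w, ⟨x, hx, y, hy, hxy⟩, z, hz, hwz⟩
    obtain ⟨s, hyz, hxs⟩ := exists_isComp_assoc.1 ⟨w, hxy, hwz⟩
    exact ⟨x, hx, s, ⟨y, hy, z, hz, hyz⟩, hxs⟩
  · rintro ⟨x, hx, s, ⟨y, hy, z, hz, hyz⟩, hxs⟩
    obtain ⟨w, hxy, hwz⟩ := exists_isComp_assoc.2 ⟨s, hyz, hxs⟩
    exact ⟨w, ⟨x, hx, y, hy, hxy⟩, z, hz, hwz⟩

theorem empty_setMul (A : Set (Arr Ob)) : setMul ∅ A = ∅ := by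
  simp [setMul]

theorem setMul_empty (A : Set (Arr Ob)) : setMul A ∅ = ∅ := by
  simp [setMul]

theorem setMul_union (A B C : Set (Arr Ob)) :
    setMul A (B ∪ C) = setMul A B ∪ setMul A C := by
  ext z
  simp only [setMul, Set.mem_union, Set.mem_ofPred_eq, or_and_right, and_or_left, exists_or]

theorem union_setMul (A B C : Set (Arr Ob)) :
    setMul (A ∪ B) C = setMul A C ∪ setMul B C := by
  ext z
  simp only [setMul, Set.mem_union, Set.mem_ofPred_eq, or_and_right, exists_or]

theorem finite_setMul {A B : Set (Arr Ob)} (hA : A.Finite) (hB : B.Finite) :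
    (setMul A B).Finite := by
  have setMul_eq_biUnion : setMul A B = ⋃ x ∈ A, ⋃ y ∈ B, {z | IsComp x y z} := by
    ext z
    simp [setMul]
  rw [setMul_eq_biUnion]
  refine hA.biUnion fun x _ => hB.biUnion fun y _ => Set.Subsingleton.finite ?_
  exact fun z hz w hw => IsComp.unique hz hw

theorem setInv_setInv (A : Set (Arr Ob)) : setInv (setInv A) = A :=
  arrInv_involutive.leftInverse.image_image A

theorem setInv_subset_iff {A B : Set (Arr Ob)} : setInv A ⊆ B ↔ A ⊆ setInv B := by
  rw [← Set.image_subset_image_iff arrInv_involutive.injective]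
  exact iff_of_eq (congrArg (· ⊆ setInv B) (setInv_setInv A))

theorem setMul_eq_sep_of_subset_identityArrs (A : Set (Arr Ob)) {E : Set (Arr Ob)}
    (hE : E ⊆ identityArrs Ob) : setMul A E = {x ∈ A | Arr.id x.dom ∈ E} := by
  ext z
  constructor
  · rintro ⟨x, hx, e, he, hxe⟩
    obtain rfl : z = x := hxe.eq_left_of_mem_identityArrs (hE he)
    have hid : Arr.id z.dom = e := by
      rw [hxe.dom_eq, id_dom_eq_of_mem_identityArrs (hE he)]
    exact ⟨hx, hid ▸ he⟩
  · rintro ⟨hz, hid⟩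
    exact ⟨z, hz, _, hid, isComp_id_dom z⟩

theorem setMul_eq_inter_of_subset_identityArrs {E F : Set (Arr Ob)}
    (hE : E ⊆ identityArrs Ob) (hF : F ⊆ identityArrs Ob) : setMul E F = E ∩ F := by
  rw [setMul_eq_sep_of_subset_identityArrs E hF]
  ext x
  exact and_congr_right fun hx => by rw [id_dom_eq_of_mem_identityArrs (hE hx)]

theorem isLocalBisection_empty : IsLocalBisection (∅ : Set (Arr Ob)) :=
  fun _ hx => hx.elim

theorem isLocalBisection_singleton (x : Arr Ob) : IsLocalBisection {x} := by
  rintro _ rfl _ rfl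
  exact ⟨fun _ => rfl, fun _ => rfl⟩

namespace IsLocalBisection

variable {A B : Set (Arr Ob)}

theorem dom_injOn (hA : IsLocalBisection A) : A.InjOn Arr.dom :=
  fun x hx y hy => (hA x hx y hy).1

theorem ran_injOn (hA : IsLocalBisection A) : A.InjOn Arr.ran :=
  fun x hx y hy => (hA x hx y hy).2

theorem mono (hB : IsLocalBisection B) (hAB : A ⊆ B) : IsLocalBisection A :=
  fun x hx y hy => hB x (hAB hx) y (hAB hy)

theorem inv (hA : IsLocalBisection A) : IsLocalBisection (setInv A) := by
  rintro _ ⟨x, hx, rfl⟩ _ ⟨y, hy, rfl⟩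
  exact ⟨fun h => congrArg arrInv (hA.ran_injOn hx hy h),
    fun h => congrArg arrInv (hA.dom_injOn hx hy h)⟩

theorem mul (hA : IsLocalBisection A) (hB : IsLocalBisection B) :
    IsLocalBisection (setMul A B) := by
  rintro z ⟨x, hx, y, hy, hz⟩ z' ⟨x', hx', y', hy', hz'⟩
  constructor
  · intro hdom
    obtain rfl : y = y' := hB.dom_injOn hy hy' (by rw [← hz.dom_eq, ← hz'.dom_eq, Arr.dom, hdom])
    obtain rfl : x = x' := hA.dom_injOn hx hx' (by rw [hz.dom_eq_ran, hz'.dom_eq_ran])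
    exact hz.unique hz'
  · intro hran
    obtain rfl : x = x' := hA.ran_injOn hx hx' (by rw [← hz.ran_eq, ← hz'.ran_eq, Arr.ran, hran])
    obtain rfl : y = y' := hB.ran_injOn hy hy' (by rw [← hz.dom_eq_ran, ← hz'.dom_eq_ran])
    exact hz.unique hz'

theorem setInv_setMul_self (hA : IsLocalBisection A) :
    setMul (setInv A) A = (fun x => Arr.id x.dom) '' A := by
  ext z
  constructor
  · rintro ⟨_, ⟨x, hx, rfl⟩, y, hy, hz⟩
    obtain rfl : x = y := hA.ran_injOn hx hy hz.dom_eq_ran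
    exact ⟨x, hx, (isComp_arrInv_self x).unique hz⟩
  · rintro ⟨x, hx, rfl⟩
    exact ⟨_, ⟨x, hx, rfl⟩, x, hx, isComp_arrInv_self x⟩

theorem setMul_setInv_setMul (hA : IsLocalBisection A) (B : Set (Arr Ob)) :
    setMul (setMul B (setInv A)) A = {b ∈ B | b.dom ∈ Arr.dom '' A} := by
  have hid : (fun x => Arr.id x.dom) '' A ⊆ identityArrs Ob :=
    Set.image_subset_iff.2 fun x _ => ⟨x.dom, rfl⟩
  have id_mem_iff (b : Ob) : Arr.id b ∈ (fun x => Arr.id x.dom) '' A ↔ b ∈ Arr.dom '' A :=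
    exists_congr fun x => and_congr_right fun _ => ⟨congrArg Arr.dom, congrArg Arr.id⟩
  simp only [setMul_assoc, hA.setInv_setMul_self, setMul_eq_sep_of_subset_identityArrs B hid,
    id_mem_iff]

theorem eq_setMul_setInv_setMul_iff_subset (hA : IsLocalBisection A) (hB : IsLocalBisection B) :
    A = setMul (setMul B (setInv A)) A ↔ A ⊆ B := by
  rw [hA.setMul_setInv_setMul B]
  constructor
  · intro h
    exact h.subset.trans (Set.sep_subset _ _)
  · intro hAB
    refine Set.Subset.antisymm (fun x hx => ⟨hAB hx, x, hx, rfl⟩) ?_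
    rintro b ⟨hb, a, ha, hdom⟩
    rwa [← hB.dom_injOn (hAB ha) hb hdom]

theorem subset_setInv_of_setMul_setMul_eq (hB : IsLocalBisection B)
    (h : setMul (setMul B A) B = B) : B ⊆ setInv A := by
  intro y hy
  obtain ⟨w, ⟨y₁, hy₁, x, hx, hw⟩, y₂, hy₂, hwy⟩ := h.superset hy
  obtain rfl : y = y₂ := hB.dom_injOn hy hy₂ hwy.dom_eq
  obtain rfl : y = y₁ := hB.ran_injOn hy hy₁ (hwy.ran_eq.trans hw.ran_eq)
  rw [hwy.eq_id_of_eq_right] at hw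
  exact ⟨x, hx, hw.eq_arrInv_of_eq_id.symm⟩

theorem setMul_self_eq_iff (hA : IsLocalBisection A) :
    setMul A A = A ↔ A ⊆ identityArrs Ob := by
  constructor
  · intro h x hx
    obtain ⟨x₁, hx₁, x₂, hx₂, hcomp⟩ := h.superset hx
    obtain rfl : x = x₂ := hA.dom_injOn hx hx₂ hcomp.dom_eq
    obtain rfl : x = x₁ := hA.ran_injOn hx hx₁ hcomp.ran_eq
    exact ⟨x.ran, hcomp.eq_id_of_eq_right⟩
  · intro h
    rw [setMul_eq_inter_of_subset_identityArrs h h, Set.inter_self]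

theorem union (hA : IsLocalBisection A) (hB : IsLocalBisection B)
    (hinvA : setMul (setInv A) B ⊆ identityArrs Ob)
    (hinvB : setMul A (setInv B) ⊆ identityArrs Ob) :
    IsLocalBisection (A ∪ B) := by
  have eq_of_dom_eq {x y : Arr Ob} (hx : x ∈ A) (hy : y ∈ B) (h : x.dom = y.dom) : x = y := by
    obtain ⟨z, hz⟩ := exists_isComp_of_dom_eq_ran (x := x) (y := arrInv y) h
    have hid : z ∈ identityArrs Ob := hinvB ⟨x, hx, _, ⟨y, hy, rfl⟩, hz⟩
    rw [hz.eq_arrInv_of_mem_identityArrs hid, arrInv_involutive]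
  have eq_of_ran_eq {x y : Arr Ob} (hx : x ∈ A) (hy : y ∈ B) (h : x.ran = y.ran) : x = y := by
    obtain ⟨z, hz⟩ := exists_isComp_of_dom_eq_ran (x := arrInv x) (y := y) h
    have hid : z ∈ identityArrs Ob := hinvA ⟨_, ⟨x, hx, rfl⟩, y, hy, hz⟩
    exact arrInv_involutive.injective (hz.eq_arrInv_of_mem_identityArrs hid)
  rintro x (hx | hx) y (hy | hy)
  · exact hA x hx y hy
  · exact ⟨eq_of_dom_eq hx hy, eq_of_ran_eq hx hy⟩
  · exact ⟨fun h => (eq_of_dom_eq hy hx h.symm).symm, fun h => (eq_of_ran_eq hy hx h.symm).symm⟩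
  · exact hB x hx y hy

end IsLocalBisection

namespace Kfin

instance : Mul (Kfin Ob) :=
  ⟨fun A B => ⟨setMul A.val B.val, finite_setMul A.2.1 B.2.1, A.2.2.mul B.2.2⟩⟩

instance : Zero (Kfin Ob) :=
  ⟨⟨∅, Set.finite_empty, isLocalBisection_empty⟩⟩

instance : Inv (Kfin Ob) :=
  ⟨fun A => ⟨setInv A.val, A.2.1.image arrInv, A.2.2.inv⟩⟩

variable {A B J E F : Kfin Ob}

theorem val_mul (A B : Kfin Ob) : (A * B).val = setMul A.val B.val := rfl

theorem nle_iff_subset : nle A B ↔ A.val ⊆ B.val :=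
  Subtype.ext_iff.trans (A.2.2.eq_setMul_setInv_setMul_iff_subset B.2.2)

theorem idem_iff_subset_identityArrs : idem A ↔ A.val ⊆ identityArrs Ob :=
  Subtype.ext_iff.trans A.2.2.setMul_self_eq_iff

theorem isJoin_iff_val_eq_union : isJoin A B J ↔ J.val = A.val ∪ B.val := by
  simp only [isJoin, nle_iff_subset]
  constructor
  · rintro ⟨hAJ, hBJ, hleast⟩
    have hunion : A.val ∪ B.val ⊆ J.val := Set.union_subset hAJ hBJ
    let AB : Kfin Ob := ⟨A.val ∪ B.val, A.2.1.union B.2.1, J.2.2.mono hunion⟩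
    exact (hleast AB Set.subset_union_left Set.subset_union_right).antisymm hunion
  · intro hJ
    rw [hJ]
    exact ⟨Set.subset_union_left, Set.subset_union_right, fun _ => Set.union_subset⟩

theorem mul_inv_mul (A : Kfin Ob) : A * A⁻¹ * A = A :=
  (nle_iff_subset.2 (Set.Subset.refl A.val)).symm

theorem inv_inv (A : Kfin Ob) : A⁻¹⁻¹ = A :=
  Subtype.ext (setInv_setInv A.val)

theorem eq_inv_of_mul_mul_eq (hA : A * B * A = A) (hB : B * A * B = B) : B = A⁻¹ := by
  have hBA : B.val ⊆ setInv A.val :=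
    B.2.2.subset_setInv_of_setMul_setMul_eq (Subtype.ext_iff.1 hB)
  have hAB : A.val ⊆ setInv B.val :=
    A.2.2.subset_setInv_of_setMul_setMul_eq (Subtype.ext_iff.1 hA)
  exact Subtype.ext (hBA.antisymm (setInv_subset_iff.2 hAB))

instance : IsInverseSemigroup (Kfin Ob) where
  mul_assoc _ _ _ := Subtype.ext (setMul_assoc _ _ _)
  mul_inv_mul := mul_inv_mul
  inv_mul_inv A := by simpa only [inv_inv] using mul_inv_mul A⁻¹
  inv_unique _ _ := eq_inv_of_mul_mul_eq
  zero_mul _ := Subtype.ext (empty_setMul _)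
  mul_zero _ := Subtype.ext (setMul_empty _)

theorem exists_ne_zero [Nonempty Ob] : ∃ A : Kfin Ob, A ≠ 0 := by
  obtain ⟨a⟩ := ‹Nonempty Ob›
  refine ⟨⟨{Arr.id a}, Set.finite_singleton _, isLocalBisection_singleton _⟩, fun h => ?_⟩
  exact Set.singleton_ne_empty _ (Subtype.ext_iff.1 h)

theorem exists_isJoin_of_compat (h : compat A B) : ∃ J, isJoin A B J := by
  have hunion : IsLocalBisection (A.val ∪ B.val) :=
    A.2.2.union B.2.2 (idem_iff_subset_identityArrs.1 h.1) (idem_iff_subset_identityArrs.1 h.2)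
  exact ⟨⟨A.val ∪ B.val, A.2.1.union B.2.1, hunion⟩, isJoin_iff_val_eq_union.2 rfl⟩

theorem isJoin_mul_left (C : Kfin Ob) (h : isJoin A B J) : isJoin (C * A) (C * B) (C * J) := by
  rw [isJoin_iff_val_eq_union] at h ⊢
  simp only [val_mul, h, setMul_union]

theorem isJoin_mul_right (C : Kfin Ob) (h : isJoin A B J) : isJoin (A * C) (B * C) (J * C) := by
  rw [isJoin_iff_val_eq_union] at h ⊢
  simp only [val_mul, h, union_setMul]

theorem exists_relative_complement (hE : idem E) (hF : idem F) (hFE : nle F E) :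
    ∃ D : Kfin Ob, idem D ∧ nle D E ∧ D * F = 0 ∧ isJoin F D E := by
  rw [idem_iff_subset_identityArrs] at hE hF
  rw [nle_iff_subset] at hFE
  have hDE : E.val \ F.val ⊆ E.val := Set.sdiff_subset
  refine ⟨⟨E.val \ F.val, E.2.1.subset hDE, E.2.2.mono hDE⟩,
    idem_iff_subset_identityArrs.2 (hDE.trans hE), nle_iff_subset.2 hDE, Subtype.ext ?_,
    isJoin_iff_val_eq_union.2 (Set.union_sdiff_cancel hFE).symm⟩
  exact (setMul_eq_inter_of_subset_identityArrs (hDE.trans hE) hF).trans Set.sdiff_inter_self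

instance [Nonempty Ob] : IsBooleanInverseSemigroup (Kfin Ob) where
  exists_ne_zero := exists_ne_zero
  compat_join _ _ := exists_isJoin_of_compat
  mul_join _ _ _ := isJoin_mul_left
  join_mul _ _ _ := isJoin_mul_right
  relcomp _ _ := exists_relative_complement

end Kfin

end Groupoid

/-- For a (nonempty) discrete groupoid `G`, the set `K_fin(G)` of finite local
bisections, under the setwise product, setwise inverse, and with the empty set as
zero, is a Boolean inverse semigroup whose idempotents are exactly the finite
subsets of the set of identities of `G`. -/
theorem Kfin_booleanInverseSemigroup (Ob : Type u) [Groupoid.{v} Ob] [Nonempty Ob] :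
    ∃ (m : Mul (Kfin Ob)) (z : Zero (Kfin Ob)) (i : Inv (Kfin Ob)),
      (∀ A B : Kfin Ob, (m.mul A B).val = setMul A.val B.val) ∧
      (z.zero.val = (∅ : Set (Arr Ob))) ∧
      (∀ A : Kfin Ob, (i.inv A).val = setInv A.val) ∧
      (@IsBooleanInverseSemigroup (Kfin Ob) m z i) ∧
      (∀ A : Kfin Ob, @idem (Kfin Ob) m A ↔ A.val ⊆ identityArrs Ob) := by
  exact ⟨inferInstance, inferInstance, inferInstance, fun _ _ => rfl, rfl, fun _ => rfl,
    inferInstance, fun _ => Kfin.idem_iff_subset_identityArrs⟩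

end Paper
end

section
/- Let S be an inverse semigroup with zero. Then S is a Boolean inverse semigroup if and only if: S has all binary orthogonal joins, multiplication distributes over binary orthogonal joins, and the semilattice of idempotents of S forms a generalized Boolean algebra with respect to the natural partial order. -/
namespace Paper

variable {S : Type*} [Mul S] [Zero S] [Inv S]

/-- `j` is the least upper bound of the idempotents `e, f` within the poset of
idempotents (and is itself idempotent). -/
def isJoinIdem {S : Type*} [Mul S] [Inv S] (e f j : S) : Prop :=
  idem j ∧ nle e j ∧ nle f j ∧ ∀ c : S, idem c → nle e c → nle f c → nle j c

/-
Given compatible `a` and `b`, let `g` be the relative complement of `a⁻¹ab⁻¹b` in `b⁻¹b` and let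
`d = bg`, the difference `b \ a`. Then `b` is the orthogonal join of `ba⁻¹ab⁻¹b ≤ a` and `d`, while
`d` is orthogonal to `a`. Hence `a, b` and `a, d` have the same upper bounds, so that compatible
joins, and left distributivity over them, reduce to orthogonal ones. Right distributivity follows
from left distributivity because inversion is an order automorphism reversing products.
-/

section InverseSemigroup

open IsInverseSemigroup (mul_inv_mul inv_mul_inv)

variable [IsInverseSemigroup S] {a b c d e f g j k : S}

/-- The underlying semigroup with zero, giving access to the library lemmas on associativity and
zero. -/
abbrev semigroupWithZero : SemigroupWithZero S where
  mul_assoc := IsInverseSemigroup.mul_assoc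
  zero_mul := IsInverseSemigroup.zero_mul
  mul_zero := IsInverseSemigroup.mul_zero

/-- Inversion as an involution, giving access to `inv_inv`. -/
abbrev involutiveInv : InvolutiveInv S where
  inv_inv a := (IsInverseSemigroup.inv_unique a⁻¹ a (inv_mul_inv a) (mul_inv_mul a)).symm

attribute [local instance] semigroupWithZero involutiveInv

theorem idem_inv_mul_self (a : S) : idem (a⁻¹ * a) := by
  rw [idem, ← mul_assoc, inv_mul_inv]

theorem idem_mul_inv_self (a : S) : idem (a * a⁻¹) := by
  rw [idem, ← mul_assoc, mul_inv_mul]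

theorem idem.inv_eq (he : idem e) : e⁻¹ = e :=
  (IsInverseSemigroup.inv_unique e e (by rw [he, he]) (by rw [he, he])).symm

theorem idem.mul_inv_mul_eq_inv (he : idem e) (hf : idem f) :
    f * (e * f)⁻¹ * e = (e * f)⁻¹ := by
  have h₁ := mul_inv_mul (e * f)
  have h₂ := inv_mul_inv (e * f)
  apply IsInverseSemigroup.inv_unique
  · simpa only [mul_assoc, IsIdempotentElem.mul_self_mul he, IsIdempotentElem.mul_self_mul hf]
      using h₁
  · simpa only [mul_assoc, IsIdempotentElem.mul_self_mul he, IsIdempotentElem.mul_self_mul hf]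
      using congrArg (fun x => f * x * e) h₂

theorem idem.mul (he : idem e) (hf : idem f) : idem (e * f) := by
  have hfxe := he.mul_inv_mul_eq_inv hf
  have hxx : idem (e * f)⁻¹ :=
    calc (e * f)⁻¹ * (e * f)⁻¹
        = f * (e * f)⁻¹ * e * (f * (e * f)⁻¹ * e) := by rw [hfxe]
      _ = f * ((e * f)⁻¹ * (e * f) * (e * f)⁻¹) * e := by simp only [mul_assoc]
      _ = (e * f)⁻¹ := by rw [inv_mul_inv, hfxe]
  rw [← inv_inv (e * f), hxx.inv_eq]
  exact hxx

theorem idem.mul_comm (he : idem e) (hf : idem f) : e * f = f * e := by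
  have hef : e * f * (e * f) = e * f := he.mul hf
  have hfe : f * e * (f * e) = f * e := hf.mul he
  rw [← (he.mul hf).inv_eq]
  refine (IsInverseSemigroup.inv_unique (e * f) (f * e) ?_ ?_).symm
  · simpa only [mul_assoc, IsIdempotentElem.mul_self_mul he, IsIdempotentElem.mul_self_mul hf]
      using hef
  · simpa only [mul_assoc, IsIdempotentElem.mul_self_mul he, IsIdempotentElem.mul_self_mul hf]
      using hfe

theorem mul_inv_rev (a b : S) : (a * b)⁻¹ = b⁻¹ * a⁻¹ := by
  have hcomm : b * b⁻¹ * (a⁻¹ * a) = a⁻¹ * a * (b * b⁻¹) :=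
    (idem_mul_inv_self b).mul_comm (idem_inv_mul_self a)
  refine (IsInverseSemigroup.inv_unique (a * b) (b⁻¹ * a⁻¹) ?_ ?_).symm
  · calc a * b * (b⁻¹ * a⁻¹) * (a * b)
        = a * (b * b⁻¹ * (a⁻¹ * a)) * b := by simp only [mul_assoc]
      _ = a * a⁻¹ * a * (b * b⁻¹ * b) := by rw [hcomm]; simp only [mul_assoc]
      _ = a * b := by rw [mul_inv_mul, mul_inv_mul]
  · calc b⁻¹ * a⁻¹ * (a * b) * (b⁻¹ * a⁻¹)
        = b⁻¹ * (a⁻¹ * a * (b * b⁻¹)) * a⁻¹ := by simp only [mul_assoc]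
      _ = b⁻¹ * b * b⁻¹ * (a⁻¹ * a * a⁻¹) := by rw [← hcomm]; simp only [mul_assoc]
      _ = b⁻¹ * a⁻¹ := by rw [inv_mul_inv, inv_mul_inv]

theorem idem.mul_eq_mul_conj (he : idem e) (b : S) : e * b = b * (b⁻¹ * e * b) :=
  calc e * b = e * (b * b⁻¹) * b := by rw [mul_assoc, mul_inv_mul]
    _ = b * (b⁻¹ * e * b) := by
      rw [he.mul_comm (idem_mul_inv_self b)]; simp only [mul_assoc]

theorem idem.conj (he : idem e) (b : S) : idem (b⁻¹ * e * b) :=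
  calc b⁻¹ * e * b * (b⁻¹ * e * b) = b⁻¹ * e * (b * (b⁻¹ * e * b)) := by simp only [mul_assoc]
    _ = b⁻¹ * (e * (e * b)) := by rw [← he.mul_eq_mul_conj, mul_assoc]
    _ = b⁻¹ * e * b := by rw [IsIdempotentElem.mul_self_mul he, mul_assoc]

theorem idem.orth (he : idem e) (hf : idem f) (h : e * f = 0) : orth e f :=
  ⟨by rw [he.inv_eq, h], by rw [hf.inv_eq, h]⟩

theorem mul_idem_nle (he : idem e) (b : S) : nle (b * e) b := by
  rw [nle, mul_inv_rev, he.inv_eq]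
  calc b * e = b * (b⁻¹ * b * e) * e := by
        simp only [← mul_assoc, mul_inv_mul]; rw [mul_assoc, he]
    _ = b * (e * b⁻¹) * (b * e) := by
        rw [(idem_inv_mul_self b).mul_comm he]; simp only [mul_assoc]

theorem nle_iff_exists_mul_idem : nle a b ↔ ∃ e, idem e ∧ a = b * e := by
  refine ⟨fun h => ⟨a⁻¹ * a, idem_inv_mul_self a, h.trans (mul_assoc _ _ _)⟩, ?_⟩
  rintro ⟨e, he, rfl⟩
  exact mul_idem_nle he b

theorem idem_mul_nle (he : idem e) (b : S) : nle (e * b) b :=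
  nle_iff_exists_mul_idem.2 ⟨_, he.conj b, he.mul_eq_mul_conj b⟩

theorem nle.trans (hab : nle a b) (hbc : nle b c) : nle a c := by
  obtain ⟨e, he, rfl⟩ := nle_iff_exists_mul_idem.1 hab
  obtain ⟨f, hf, rfl⟩ := nle_iff_exists_mul_idem.1 hbc
  exact nle_iff_exists_mul_idem.2 ⟨f * e, hf.mul he, mul_assoc _ _ _⟩

theorem nle.antisymm (hab : nle a b) (hba : nle b a) : a = b := by
  obtain ⟨e, he, hae⟩ := nle_iff_exists_mul_idem.1 hab
  obtain ⟨f, hf, hbf⟩ := nle_iff_exists_mul_idem.1 hba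
  have hbe : b * e = b :=
    calc b * e = a * e * f := by rw [hbf, mul_assoc, hf.mul_comm he, mul_assoc]
      _ = b := by rw [hae, mul_assoc b, he, ← hae, ← hbf]
  rw [hae, hbe]

theorem nle.mul_left (h : nle a b) (c : S) : nle (c * a) (c * b) := by
  obtain ⟨e, he, rfl⟩ := nle_iff_exists_mul_idem.1 h
  simpa only [mul_assoc] using mul_idem_nle he (c * b)

theorem nle.inv (h : nle a b) : nle a⁻¹ b⁻¹ := by
  obtain ⟨e, he, rfl⟩ := nle_iff_exists_mul_idem.1 h
  simpa only [mul_inv_rev, he.inv_eq] using idem_mul_nle he b⁻¹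

theorem nle.mul_right (h : nle a b) (c : S) : nle (a * c) (b * c) := by
  simpa only [mul_inv_rev, inv_inv] using (h.inv.mul_left c⁻¹).inv

theorem nle.mul (hab : nle a b) (hcd : nle c d) : nle (a * c) (b * d) :=
  (hab.mul_right c).trans (hcd.mul_left b)

theorem nle.idem_left (h : nle a e) (he : idem e) : idem a := by
  obtain ⟨f, hf, rfl⟩ := nle_iff_exists_mul_idem.1 h
  exact he.mul hf

theorem idem.mul_eq_of_nle (he : idem e) (h : nle e a) : a * e = e := by
  have h' : e = a * e⁻¹ * e := h
  rw [he.inv_eq, mul_assoc, he] at h'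
  exact h'.symm

theorem compat_of_nle (ha : nle a j) (hb : nle b j) : compat a b :=
  ⟨(ha.inv.mul hb).idem_left (idem_inv_mul_self j), (ha.mul hb.inv).idem_left (idem_mul_inv_self j)⟩

theorem idem.compat (he : idem e) (hf : idem f) : compat e f :=
  ⟨he.inv_eq.symm ▸ he.mul hf, hf.inv_eq.symm ▸ he.mul hf⟩

theorem orth.compat (h : orth a b) : compat a b :=
  ⟨h.1 ▸ zero_mul 0, h.2 ▸ zero_mul 0⟩

theorem compat.mul_inv_mul_nle (h : compat a b) : nle (b * (a⁻¹ * a)) a := by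
  have hba : b * a⁻¹ = a * b⁻¹ := by
    rw [← h.2.inv_eq, mul_inv_rev, inv_inv]
  rw [← mul_assoc, hba]
  exact idem_mul_nle h.2 a

theorem compat.orth_mul_idem (h : compat a b) (hg : idem g) (hag : a⁻¹ * a * g = 0) :
    orth a (b * g) := by
  constructor
  · calc a⁻¹ * (b * g) = a⁻¹ * a * (a⁻¹ * b) * g := by
          simp only [← mul_assoc, inv_mul_inv]
      _ = a⁻¹ * b * (a⁻¹ * a * g) := by
          rw [(idem_inv_mul_self a).mul_comm h.1, mul_assoc]
      _ = 0 := by rw [hag, mul_zero]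
  · calc a * (b * g)⁻¹ = a * (a⁻¹ * a * g) * b⁻¹ := by
          simp only [mul_inv_rev, hg.inv_eq, ← mul_assoc, mul_inv_mul]
      _ = 0 := by rw [hag, mul_zero, zero_mul]

theorem isJoin.inv (h : isJoin a b j) : isJoin a⁻¹ b⁻¹ j⁻¹ := by
  refine ⟨h.1.inv, h.2.1.inv, fun c hac hbc => ?_⟩
  have hjc : nle j c⁻¹ := h.2.2 c⁻¹ (inv_inv a ▸ hac.inv) (inv_inv b ▸ hbc.inv)
  exact inv_inv c ▸ hjc.inv

theorem isJoin.replace_right (h : isJoin a d j) (hdb : nle d b) (hbj : nle b j) : isJoin a b j :=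
  ⟨h.1, hbj, fun c hac hbc => h.2.2 c hac (hdb.trans hbc)⟩

theorem isJoin.idem_join (h : isJoin e f j) (he : idem e) (hf : idem f) : idem j := by
  have nle_inv_mul_self {e : S} (he : idem e) (hej : nle e j) : nle e (j⁻¹ * j) := by
    have := hej.inv.mul hej
    rwa [he.inv_eq, he] at this
  exact (h.2.2 (j⁻¹ * j) (nle_inv_mul_self he h.1) (nle_inv_mul_self hf h.2.1)).idem_left
    (idem_inv_mul_self j)

theorem isJoin.isJoinIdem (h : isJoin e f j) (he : idem e) (hf : idem f) : isJoinIdem e f j :=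
  ⟨h.idem_join he hf, h.1, h.2.1, fun c _ => h.2.2 c⟩

theorem isJoinIdem.isJoin (h : isJoinIdem e f j) (hk : isJoin e f k) : isJoin e f j := by
  have hkj : nle k j := hk.2.2 j h.2.1 h.2.2.1
  have hjk : nle j k := h.2.2.2 k (hkj.idem_left h.1) hk.1 hk.2.1
  exact hjk.antisymm hkj ▸ hk

/-- `d` plays the role of the difference `b \ a`: it is orthogonal to `a`, and joining it with some
part of `a` gives back `b`. -/
def isDiff (a b d : S) : Prop := orth a d ∧ ∃ c, nle c a ∧ isJoin c d b

theorem isDiff.isJoin_iff (h : isDiff a b d) : isJoin a d j ↔ isJoin a b j := by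
  obtain ⟨-, c, hca, hcdb⟩ := h
  exact ⟨fun hj => hj.replace_right hcdb.2.1 (hcdb.2.2 j (hca.trans hj.1) hj.2.1),
    fun hj => ⟨hj.1, hcdb.2.1.trans hj.2.1, fun x hax hdx =>
      hj.2.2 x hax (hcdb.2.2 x (hca.trans hax) hdx)⟩⟩

theorem compat.exists_isDiff
    (mul_join : ∀ a b j c : S, orth a b → isJoin a b j → isJoin (c * a) (c * b) (c * j))
    (relcomp : ∀ e f : S, idem e → idem f → nle f e →
      ∃ g : S, idem g ∧ nle g e ∧ g * f = 0 ∧ isJoin f g e)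
    (h : compat a b) : ∃ d, isDiff a b d := by
  have he := idem_inv_mul_self a
  have hf := idem_inv_mul_self b
  have hef := he.mul hf
  obtain ⟨g, hg, hgf, hg0, hjoin⟩ := relcomp _ _ hf hef (idem_mul_nle he _)
  have hefg : a⁻¹ * a * (b⁻¹ * b) * g = 0 := by rw [hef.mul_comm hg, hg0]
  have heg : a⁻¹ * a * g = 0 := by rwa [mul_assoc _ _ g, hg.mul_eq_of_nle hgf] at hefg
  refine ⟨b * g, h.orth_mul_idem hg heg, b * (a⁻¹ * a * (b⁻¹ * b)), ?_, ?_⟩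
  · exact ((mul_idem_nle hf _).mul_left b).trans h.mul_inv_mul_nle
  · simpa only [← mul_assoc, mul_inv_mul] using mul_join _ _ _ b (hef.orth hg hefg) hjoin

theorem isDiff.isJoin_mul_left (hd : isDiff a b d) (hbj : nle b j)
    (h : isJoin (c * a) (c * d) (c * j)) : isJoin (c * a) (c * b) (c * j) := by
  obtain ⟨-, _, -, -, hdb, -⟩ := hd
  exact h.replace_right (hdb.mul_left c) (hbj.mul_left c)

theorem isJoin.mul_right_of_mul_left
    (mul_join : ∀ a b j c : S, isJoin a b j → isJoin (c * a) (c * b) (c * j))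
    (h : isJoin a b j) (c : S) : isJoin (a * c) (b * c) (j * c) := by
  simpa only [mul_inv_rev, inv_inv] using (mul_join _ _ _ c⁻¹ h.inv).inv

theorem exists_relcomp_of_orth_join
    (orth_join : ∀ a b : S, orth a b → ∃ j, isJoin a b j)
    (idem_relcomp : ∀ e f : S, idem e → idem f → nle f e →
      ∃ g : S, idem g ∧ g * f = 0 ∧ isJoinIdem f g e)
    (he : idem e) (hf : idem f) (hfe : nle f e) :
    ∃ g : S, idem g ∧ nle g e ∧ g * f = 0 ∧ isJoin f g e := by
  obtain ⟨g, hg, hgf, hjoin⟩ := idem_relcomp e f he hf hfe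
  obtain ⟨k, hk⟩ := orth_join f g (hf.orth hg (hf.mul_comm hg ▸ hgf))
  exact ⟨g, hg, hjoin.2.2.1, hgf, hjoin.isJoin hk⟩

theorem isBooleanInverseSemigroup_of_orth
    (hnz : ∃ a : S, a ≠ 0)
    (orth_join : ∀ a b : S, orth a b → ∃ j, isJoin a b j)
    (orth_mul_join : ∀ a b j c : S, orth a b → isJoin a b j → isJoin (c * a) (c * b) (c * j))
    (idem_relcomp : ∀ e f : S, idem e → idem f → nle f e →
      ∃ g : S, idem g ∧ g * f = 0 ∧ isJoinIdem f g e) :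
    IsBooleanInverseSemigroup S := by
  have relcomp (e f : S) (he : idem e) (hf : idem f) (hfe : nle f e) :=
    exists_relcomp_of_orth_join orth_join idem_relcomp he hf hfe
  have mul_join (a b j c : S) (h : isJoin a b j) : isJoin (c * a) (c * b) (c * j) := by
    obtain ⟨d, hd⟩ := (compat_of_nle h.1 h.2.1).exists_isDiff orth_mul_join relcomp
    exact hd.isJoin_mul_left h.2.1 (orth_mul_join a d j c hd.1 (hd.isJoin_iff.2 h))
  refine
    { exists_ne_zero := hnz
      compat_join := fun a b hab => ?_
      mul_join := mul_join
      join_mul := fun a b j c h => h.mul_right_of_mul_left mul_join c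
      relcomp := relcomp }
  obtain ⟨d, hd⟩ := hab.exists_isDiff orth_mul_join relcomp
  obtain ⟨j, hj⟩ := orth_join a d hd.1
  exact ⟨j, hd.isJoin_iff.1 hj⟩

end InverseSemigroup

section BooleanInverseSemigroup

open IsBooleanInverseSemigroup

variable [IsBooleanInverseSemigroup S] {e f g j : S}

theorem idem.exists_isJoinIdem (he : idem e) (hf : idem f) : ∃ j, isJoinIdem e f j :=
  let ⟨j, hj⟩ := compat_join e f (he.compat hf)
  ⟨j, hj.isJoinIdem he hf⟩

theorem isJoinIdem.mul_left (h : isJoinIdem f g j) (he : idem e) (hf : idem f) (hg : idem g) :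
    isJoinIdem (e * f) (e * g) (e * j) := by
  obtain ⟨k, hk⟩ := compat_join f g (hf.compat hg)
  exact (mul_join f g j e (h.isJoin hk)).isJoinIdem (he.mul hf) (he.mul hg)

theorem exists_isJoinIdem_relcomp (he : idem e) (hf : idem f) (hfe : nle f e) :
    ∃ g : S, idem g ∧ nle g e ∧ g * f = 0 ∧ isJoinIdem f g e := by
  obtain ⟨g, hg, hge, hgf, hjoin⟩ := relcomp e f he hf hfe
  exact ⟨g, hg, hge, hgf, hjoin.isJoinIdem hf hg⟩

end BooleanInverseSemigroup

theorem booleanInverseSemigroup_iff_orthogonal_general {S : Type*} [Mul S] [Zero S] [Inv S]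
    [IsInverseSemigroup S] (hnz : ∃ a : S, a ≠ 0) :
    List.TFAE [IsBooleanInverseSemigroup S,
      (∀ a b : S, orth a b → ∃ j, isJoin a b j) ∧
       (∀ a b j c : S, orth a b → isJoin a b j → isJoin (c * a) (c * b) (c * j)) ∧
       (∀ a b j c : S, orth a b → isJoin a b j → isJoin (a * c) (b * c) (j * c)) ∧
       (∀ e f : S, idem e → idem f → ∃ j, isJoinIdem e f j) ∧
       (∀ e f g j : S, idem e → idem f → idem g → isJoinIdem f g j →
          isJoinIdem (e * f) (e * g) (e * j)) ∧
       (∀ e f : S, idem e → idem f → nle f e →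
          ∃ g : S, idem g ∧ nle g e ∧ g * f = 0 ∧ isJoinIdem f g e),
      (∀ a b : S, orth a b → ∃ j, isJoin a b j) ∧
       (∀ a b j c : S, orth a b → isJoin a b j → isJoin (c * a) (c * b) (c * j)) ∧
       (∀ e f : S, idem e → idem f → nle f e →
          ∃ g : S, idem g ∧ g * f = 0 ∧ isJoinIdem f g e)] := by
  tfae_have 1 → 2 := fun hS =>
    ⟨fun a b hab => hS.compat_join a b hab.compat,
      fun a b j c _ => hS.mul_join a b j c,
      fun a b j c _ => hS.join_mul a b j c,
      fun _ _ => idem.exists_isJoinIdem,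
      fun _ _ _ _ he hf hg h => h.mul_left he hf hg,
      fun _ _ => exists_isJoinIdem_relcomp⟩
  tfae_have 2 → 3 := fun ⟨orth_join, mul_join, _, _, _, relcomp⟩ =>
    ⟨orth_join, mul_join, fun e f he hf hfe =>
      let ⟨g, hg, _, hgf, hjoin⟩ := relcomp e f he hf hfe
      ⟨g, hg, hgf, hjoin⟩⟩
  tfae_have 3 → 1 := fun ⟨orth_join, mul_join, relcomp⟩ =>
    isBooleanInverseSemigroup_of_orth hnz orth_join mul_join relcomp
  tfae_finish

/-- An inverse semigroup with zero (not the zero semigroup) is a Boolean inverse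
semigroup iff it has all binary orthogonal joins, multiplication distributes over
binary orthogonal joins, and the semilattice of idempotents forms a generalized
Boolean algebra with respect to the natural partial order (binary joins of
idempotents exist, are distributed over by meets, and relative complements exist). -/
theorem booleanInverseSemigroup_iff_orthogonal {S : Type*} [Mul S] [Zero S] [Inv S]
    [IsInverseSemigroup S] (hnz : ∃ a : S, a ≠ 0) :
    IsBooleanInverseSemigroup S ↔
      ((∀ a b : S, orth a b → ∃ j, isJoin a b j) ∧
       (∀ a b j c : S, orth a b → isJoin a b j → isJoin (c * a) (c * b) (c * j)) ∧
       (∀ a b j c : S, orth a b → isJoin a b j → isJoin (a * c) (b * c) (j * c)) ∧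
       (∀ e f : S, idem e → idem f → ∃ j, isJoinIdem e f j) ∧
       (∀ e f g j : S, idem e → idem f → idem g → isJoinIdem f g j →
          isJoinIdem (e * f) (e * g) (e * j)) ∧
       (∀ e f : S, idem e → idem f → nle f e →
          ∃ g : S, idem g ∧ nle g e ∧ g * f = 0 ∧ isJoinIdem f g e)) :=
  (booleanInverseSemigroup_iff_orthogonal_general hnz).out 0 1

end Paper
end

section
/- Let 𝒢 be a connected discrete groupoid. Then 𝒢 is isomorphic to X × G × X for some group G and nonempty set X (with product (x, g, y)(y, h, z) = (x, gh, z)), and the Boolean inverse semigroup K_fin(𝒢) of finite local bisections of 𝒢 is isomorphic to the Boolean inverse semigroup M_{|X|}(G⁰) of |X| × |X| generalized rook matrices over G⁰. -/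
namespace Paper

variable {S : Type*} [Mul S] [Zero S] [Inv S]

open CategoryTheory

universe u v

/-- An `X × X` generalized rook matrix over `G⁰` (`G` with a zero adjoined):
finitely many nonzero entries, and any two entries in the same row (resp. column)
lying in distinct columns (resp. rows) have orthogonal ranges (resp. domains). -/
def IsRook {X : Type*} {G : Type*} [Group G] (M : X → X → WithZero G) : Prop :=
  Set.Finite {p : X × X | M p.1 p.2 ≠ 0} ∧
  (∀ i j k : X, j ≠ k → (M i j)⁻¹ * M i k = 0) ∧
  (∀ i j k : X, i ≠ j → M i k * (M j k)⁻¹ = 0)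

open Classical in
/-- The product of rook matrices: `(A B)_{i j} = ⊕ₖ A_{i k} B_{k j}` (for rook
matrices, at most one summand is nonzero). -/
noncomputable def rookMul {X : Type*} {G : Type*} [Group G]
    (A B : X → X → WithZero G) : X → X → WithZero G := fun i j =>
  if h : ∃ k, A i k * B k j ≠ 0 then A i h.choose * B h.choose j else 0

/-- `tripleComp x y z` says that, in the groupoid `X × G × X` with product
`(x, g, y)(y, h, z) = (x, g h, z)`, the elements `x` and `y` are composable with
product `z`. -/
def tripleComp {X : Type*} {G : Type*} [Group G] (x y z : X × G × X) : Prop :=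
  x.2.2 = y.1 ∧ z = (x.1, x.2.1 * y.2.1, y.2.2)

/-!
Choosing a base object `o` and an arrow `o ⟶ a` for every object `a` identifies each hom-set with
the group `End o`, and hence the groupoid with `X × G × X`, where `X` is the set of objects and
`G = End o`. A matrix `M` over `G⁰` is determined by its graph `{(i, g, j) | M i j = g}`, a subset
of `X × G × X`. Its rows and columns contain at most one nonzero entry each precisely when the
graph is a local bisection, and the rook product is the setwise product of graphs, because at most
one summand `A i k * B k j` is nonzero.
-/

section Arrows

variable {Ob : Type u} [Groupoid.{v} Ob]

theorem isComp_mk_iff {a b c : Ob} {g : a ⟶ b} {h : b ⟶ c} {z : Arr Ob} :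
    IsComp ⟨b, c, h⟩ ⟨a, b, g⟩ z ↔ z = ⟨a, c, g ≫ h⟩ := by
  constructor
  · rintro ⟨a, b, c, g, h, hy, hx, rfl⟩
    cases hy
    cases hx
    rfl
  · rintro rfl
    exact ⟨a, b, c, g, h, rfl, rfl, rfl⟩

theorem exists_isComp_iff {x y : Arr Ob} : (∃ z, IsComp x y z) ↔ x.1 = y.2.1 := by
  constructor
  · rintro ⟨_, a, b, c, g, h, rfl, rfl, rfl⟩
    rfl
  · obtain ⟨b, c, h⟩ := x
    obtain ⟨a, b', g⟩ := y
    rintro rfl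
    exact ⟨_, isComp_mk_iff.2 rfl⟩

theorem IsComp.source_eq {x y z : Arr Ob} (h : IsComp x y z) : z.1 = y.1 := by
  obtain ⟨a, b, c, g, h, rfl, rfl, rfl⟩ := h
  rfl

theorem IsComp.target_eq {x y z : Arr Ob} (h : IsComp x y z) : z.2.1 = x.2.1 := by
  obtain ⟨a, b, c, g, h, rfl, rfl, rfl⟩ := h
  rfl

theorem IsComp.unique_s11 {x y z z' : Arr Ob} (h : IsComp x y z) (h' : IsComp x y z') : z = z' := by
  obtain ⟨a, b, c, g, h, rfl, rfl, rfl⟩ := h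
  exact (isComp_mk_iff.1 h').symm

theorem IsLocalBisection.setMul {A B : Set (Arr Ob)} (hA : IsLocalBisection A)
    (hB : IsLocalBisection B) : IsLocalBisection (setMul A B) := by
  rintro z ⟨x, hx, y, hy, hz⟩ z' ⟨x', hx', y', hy', hz'⟩
  have hxy : x.1 = y.2.1 := exists_isComp_iff.1 ⟨z, hz⟩
  have hxy' : x'.1 = y'.2.1 := exists_isComp_iff.1 ⟨z', hz'⟩
  constructor
  · intro hsource
    obtain rfl : y = y' := (hB y hy y' hy').1 (by rw [← hz.source_eq, hsource, hz'.source_eq])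
    obtain rfl : x = x' := (hA x hx x' hx').1 (hxy.trans hxy'.symm)
    exact hz.unique_s11 hz'
  · intro htarget
    obtain rfl : x = x' := (hA x hx x' hx').2 (by rw [← hz.target_eq, htarget, hz'.target_eq])
    obtain rfl : y = y' := (hB y hy y' hy').2 (hxy.symm.trans hxy')
    exact hz.unique_s11 hz'

theorem exists_kfin_val_eq_setMul (A B : Kfin Ob) : ∃ C : Kfin Ob, C.val = setMul A.val B.val :=
  ⟨⟨setMul A.val B.val, finite_setMul A.2.1 B.2.1, A.2.2.setMul B.2.2⟩, rfl⟩

end Arrows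

section Triples

variable {X G : Type*}

/-- A local bisection of the groupoid `X × G × X`, in which `(i, g, j)` has domain `j` and
range `i`. -/
def IsTripleBisection (T : Set (X × G × X)) : Prop :=
  T.InjOn (fun t => t.2.2) ∧ T.InjOn (fun t => t.1)

variable [Group G]

theorem exists_tripleComp_iff {s t : X × G × X} : (∃ r, tripleComp s t r) ↔ s.2.2 = t.1 :=
  ⟨fun ⟨_, h, _⟩ => h, fun h => ⟨_, h, rfl⟩⟩

/-- The setwise product of subsets of the groupoid `X × G × X`. -/
def tripleMul (S T : Set (X × G × X)) : Set (X × G × X) :=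
  {r | ∃ s ∈ S, ∃ t ∈ T, tripleComp s t r}

theorem mem_tripleMul_iff {S T : Set (X × G × X)} {i j : X} {g : G} :
    (i, g, j) ∈ tripleMul S T ↔ ∃ k a b, (i, a, k) ∈ S ∧ (k, b, j) ∈ T ∧ a * b = g := by
  constructor
  · rintro ⟨⟨i, a, k⟩, hs, ⟨k', b, j⟩, ht, hk, hr⟩
    obtain rfl : k = k' := hk
    cases hr
    exact ⟨k, a, b, hs, ht, rfl⟩
  · rintro ⟨k, a, b, hs, ht, rfl⟩
    exact ⟨(i, a, k), hs, (k, b, j), ht, rfl, rfl⟩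

end Triples

section Graph

variable {X G : Type*}

/-- The graph of a matrix over `G⁰`: the triples `(i, g, j)` such that `g` is the entry of `M` at
`(i, j)`, so that zero entries contribute nothing. -/
def graph (M : X → X → WithZero G) : Set (X × G × X) :=
  {t | M t.1 t.2.2 = t.2.1}

theorem mem_graph_iff {M : X → X → WithZero G} {i j : X} {g : G} :
    (i, g, j) ∈ graph M ↔ M i j = g :=
  Iff.rfl

theorem entry_unique_of_mem_graph {M : X → X → WithZero G} {i j : X} {g g' : G}
    (hg : (i, g, j) ∈ graph M) (hg' : (i, g', j) ∈ graph M) : g = g' :=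
  WithZero.coe_inj.1 (hg.symm.trans hg')

theorem ne_zero_iff_exists_mem_graph {M : X → X → WithZero G} {i j : X} :
    M i j ≠ 0 ↔ ∃ g, (i, g, j) ∈ graph M := by
  simp only [WithZero.ne_zero_iff_exists, mem_graph_iff, eq_comm]

theorem graph_injective : Function.Injective (graph : (X → X → WithZero G) → Set (X × G × X)) := by
  intro M N h
  funext i j
  exact Option.ext fun g => Set.ext_iff.1 h (i, g, j)

open Classical in
/-- The matrix over `G⁰` with graph `T`. If `T` contains several triples `(i, g, j)` with the same
`i` and `j`, one of them is chosen arbitrarily. -/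
noncomputable def matrixOfGraph (T : Set (X × G × X)) : X → X → WithZero G := fun i j =>
  if h : ∃ g : G, (i, g, j) ∈ T then (h.choose : G) else 0

theorem graph_matrixOfGraph {T : Set (X × G × X)}
    (hT : ∀ i j g g', (i, g, j) ∈ T → (i, g', j) ∈ T → g = g') : graph (matrixOfGraph T) = T := by
  ext ⟨i, g, j⟩
  rw [mem_graph_iff, matrixOfGraph]
  split_ifs with hij
  · rw [WithZero.coe_inj]
    constructor
    · rintro rfl
      exact hij.choose_spec
    · exact hT i j _ g hij.choose_spec
  · exact iff_of_false (WithZero.coe_ne_zero.symm) fun hg => hij ⟨g, hg⟩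

theorem IsTripleBisection.graph_matrixOfGraph {T : Set (X × G × X)} (hT : IsTripleBisection T) :
    graph (matrixOfGraph T) = T :=
  Paper.graph_matrixOfGraph fun _ _ _ _ hg hg' => congrArg (fun t => t.2.1) (hT.2 hg hg' rfl)

theorem finite_graph_iff {M : X → X → WithZero G} :
    (graph M).Finite ↔ {p : X × X | M p.1 p.2 ≠ 0}.Finite := by
  refine Set.BijOn.finite_iff_finite (f := fun t => (t.1, t.2.2)) ⟨?_, ?_, ?_⟩
  · rintro ⟨i, g, j⟩ hg
    exact ne_zero_iff_exists_mem_graph.2 ⟨g, hg⟩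
  · rintro ⟨i, g, j⟩ hg ⟨i', g', j'⟩ hg' hij
    cases hij
    rw [entry_unique_of_mem_graph hg hg']
  · rintro ⟨i, j⟩ hij
    obtain ⟨g, hg⟩ := ne_zero_iff_exists_mem_graph.1 hij
    exact ⟨(i, g, j), hg, rfl⟩

theorem injOn_target_graph_iff {M : X → X → WithZero G} :
    (graph M).InjOn (fun t => t.1) ↔ ∀ i j k, M i j ≠ 0 → M i k ≠ 0 → j = k := by
  simp only [ne_zero_iff_exists_mem_graph]
  constructor
  · rintro h i j k ⟨g, hg⟩ ⟨g', hg'⟩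
    exact congrArg (fun t => t.2.2) (h hg hg' rfl)
  · rintro h ⟨i, g, j⟩ hg ⟨i', g', k⟩ hg' hi
    obtain rfl : i = i' := hi
    obtain rfl : j = k := h i j k ⟨g, hg⟩ ⟨g', hg'⟩
    rw [entry_unique_of_mem_graph hg hg']

theorem injOn_source_graph_iff {M : X → X → WithZero G} :
    (graph M).InjOn (fun t => t.2.2) ↔ ∀ i j k, M i k ≠ 0 → M j k ≠ 0 → i = j := by
  simp only [ne_zero_iff_exists_mem_graph]
  constructor
  · rintro h i j k ⟨g, hg⟩ ⟨g', hg'⟩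
    exact congrArg (fun t => t.1) (h hg hg' rfl)
  · rintro h ⟨i, g, k⟩ hg ⟨j, g', k'⟩ hg' hk
    obtain rfl : k = k' := hk
    obtain rfl : i = j := h i j k ⟨g, hg⟩ ⟨g', hg'⟩
    rw [entry_unique_of_mem_graph hg hg']

end Graph

section Rook

variable {X G : Type*} [Group G]

theorem isRook_iff_graph {M : X → X → WithZero G} :
    IsRook M ↔ (graph M).Finite ∧ IsTripleBisection (graph M) := by
  have orthogonal_in_row : (∀ i j k, j ≠ k → (M i j)⁻¹ * M i k = 0) ↔
      ∀ i j k, M i j ≠ 0 → M i k ≠ 0 → j = k := by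
    simp only [mul_eq_zero, inv_eq_zero]
    grind
  have orthogonal_in_column : (∀ i j k, i ≠ j → M i k * (M j k)⁻¹ = 0) ↔
      ∀ i j k, M i k ≠ 0 → M j k ≠ 0 → i = j := by
    simp only [mul_eq_zero, inv_eq_zero]
    grind
  rw [IsRook, orthogonal_in_row, orthogonal_in_column, IsTripleBisection, finite_graph_iff,
    injOn_target_graph_iff, injOn_source_graph_iff, and_comm (a := ∀ i j k, M i j ≠ 0 → _)]

/-- Rook matrices correspond to finite local bisections of `X × G × X` by taking graphs. -/
noncomputable def tripleBisectionEquivRook :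
    {T : Set (X × G × X) // T.Finite ∧ IsTripleBisection T} ≃
      {M : X → X → WithZero G // IsRook M} where
  toFun T := ⟨matrixOfGraph T.1, isRook_iff_graph.2 (by
    rw [T.2.2.graph_matrixOfGraph]
    exact T.2)⟩
  invFun M := ⟨graph M.1, isRook_iff_graph.1 M.2⟩
  left_inv T := Subtype.ext T.2.2.graph_matrixOfGraph
  right_inv M := Subtype.ext <| graph_injective
    (isRook_iff_graph.1 M.2).2.graph_matrixOfGraph

theorem rookMul_apply_of_ne_zero {A B : X → X → WithZero G}
    (hA : ∀ i j k, A i j ≠ 0 → A i k ≠ 0 → j = k) {i j k : X} (hk : A i k ≠ 0) :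
    rookMul A B i j = A i k * B k j := by
  rw [rookMul]
  split_ifs with h
  · rw [hA i _ k (left_ne_zero_of_mul h.choose_spec) hk]
  · push Not at h
    exact (h k).symm

theorem graph_rookMul {A B : X → X → WithZero G}
    (hA : ∀ i j k, A i j ≠ 0 → A i k ≠ 0 → j = k) :
    graph (rookMul A B) = tripleMul (graph A) (graph B) := by
  ext ⟨i, g, j⟩
  rw [mem_tripleMul_iff, mem_graph_iff]
  constructor
  · intro hg
    obtain ⟨k, hk⟩ : ∃ k, A i k * B k j ≠ 0 := by
      by_contra h
      rw [rookMul, dif_neg h] at hg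
      exact WithZero.coe_ne_zero hg.symm
    obtain ⟨a, ha⟩ := ne_zero_iff_exists_mem_graph.1 (left_ne_zero_of_mul hk)
    obtain ⟨b, hb⟩ := ne_zero_iff_exists_mem_graph.1 (right_ne_zero_of_mul hk)
    rw [rookMul_apply_of_ne_zero hA (left_ne_zero_of_mul hk), mem_graph_iff.1 ha,
      mem_graph_iff.1 hb] at hg
    exact ⟨k, a, b, ha, hb, by exact_mod_cast hg⟩
  · rintro ⟨k, a, b, ha, hb, rfl⟩
    rw [rookMul_apply_of_ne_zero hA (ne_zero_iff_exists_mem_graph.2 ⟨a, ha⟩),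
      mem_graph_iff.1 ha, mem_graph_iff.1 hb, WithZero.coe_mul]

end Rook

/-- An isomorphism of groupoids from the groupoid with objects `Ob` to `X × G × X`, as a bijection
between arrows that preserves and reflects composition. -/
structure TripleIso (Ob : Type u) [Groupoid.{v} Ob] (X G : Type*) [Group G] extends
    Arr Ob ≃ X × G × X where
  isComp_iff : ∀ x y z, IsComp x y z ↔ tripleComp (toFun x) (toFun y) (toFun z)

namespace TripleIso

section Coordinates

variable {Ob : Type u} [Groupoid.{v} Ob]

/-- The coordinates on a connected groupoid given by a choice of an arrow `c a` from a base object
`o` to every object `a`: an arrow `g : a ⟶ b` is read as the loop `c a ≫ g ≫ (c b)⁻¹` at `o`. -/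
def arrEquivOfPaths {o : Ob} (c : ∀ a, o ⟶ a) : Arr Ob ≃ Ob × End o × Ob where
  toFun x := (x.2.1, c x.1 ≫ x.2.2 ≫ Groupoid.inv (c x.2.1), x.1)
  invFun t := ⟨t.2.2, t.1, Groupoid.inv (c t.2.2) ≫ t.2.1 ≫ c t.1⟩
  left_inv := fun ⟨a, b, _⟩ => congrArg (fun k : a ⟶ b => (⟨a, b, k⟩ : Arr Ob)) (by simp)
  right_inv t := by simp

theorem tripleComp_arrEquivOfPaths {o : Ob} (c : ∀ a, o ⟶ a) {a b d : Ob} (g : a ⟶ b)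
    (h : b ⟶ d) :
    tripleComp (arrEquivOfPaths c ⟨b, d, h⟩) (arrEquivOfPaths c ⟨a, b, g⟩)
      (arrEquivOfPaths c ⟨a, d, g ≫ h⟩) := by
  have loop_comp : c a ≫ (g ≫ h) ≫ Groupoid.inv (c d) =
      (c a ≫ g ≫ Groupoid.inv (c b)) ≫ c b ≫ h ≫ Groupoid.inv (c d) := by simp
  exact ⟨rfl, congrArg (fun k : End o => (d, k, a)) loop_comp⟩

/-- The isomorphism of a connected groupoid with `X × G × X`, where `X` is its set of objects and
`G` the group of loops at `o`. Multiplication in `End o` is `g * h = h ≫ g`, in agreement with the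
order of factors in `IsComp`. -/
def ofPaths {o : Ob} (c : ∀ a, o ⟶ a) : TripleIso Ob Ob (End o) where
  toEquiv := arrEquivOfPaths c
  isComp_iff := by
    rintro ⟨b, d, h⟩ ⟨a, b', g⟩ z
    constructor
    · rintro ⟨a, b, d, g, h, hy, hx, rfl⟩
      rw [hx, hy]
      exact tripleComp_arrEquivOfPaths c g h
    · rintro ⟨hb, hz⟩
      obtain rfl : b = b' := hb
      exact isComp_mk_iff.2 <|
        (arrEquivOfPaths c).injective (hz.trans (tripleComp_arrEquivOfPaths c g h).2.symm)

variable {X X' G G' : Type*} [Group G] [Group G']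

/-- Transport of coordinates along a bijection of index sets and an isomorphism of groups. -/
def congr (φ : TripleIso Ob X G) (e : X ≃ X') (f : G ≃* G') : TripleIso Ob X' G' where
  toEquiv := φ.toEquiv.trans (e.prodCongr (f.toEquiv.prodCongr e))
  isComp_iff x y z := by
    rw [φ.isComp_iff]
    simp [tripleComp, Prod.ext_iff, ← map_mul]

end Coordinates

variable {Ob : Type u} [Groupoid.{v} Ob] {X G : Type*} [Group G] (φ : TripleIso Ob X G)

theorem source_eq_target_iff (x y : Arr Ob) :
    x.1 = y.2.1 ↔ (φ.toEquiv x).2.2 = (φ.toEquiv y).1 := by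
  rw [← exists_isComp_iff, ← exists_tripleComp_iff, ← φ.toEquiv.exists_congr_right]
  exact exists_congr (φ.isComp_iff x y)

theorem source_eq_iff (x y : Arr Ob) :
    x.1 = y.1 ↔ (φ.toEquiv x).2.2 = (φ.toEquiv y).2.2 := by
  let e : Arr Ob := ⟨y.1, y.1, 𝟙 y.1⟩
  rw [(φ.source_eq_target_iff y e).1 rfl]
  exact φ.source_eq_target_iff x e

theorem target_eq_iff (x y : Arr Ob) :
    x.2.1 = y.2.1 ↔ (φ.toEquiv x).1 = (φ.toEquiv y).1 := by
  let e : Arr Ob := ⟨y.2.1, y.2.1, 𝟙 y.2.1⟩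
  rw [← (φ.source_eq_target_iff e y).1 rfl, eq_comm (b := y.2.1),
    eq_comm (b := (φ.toEquiv e).2.2)]
  exact φ.source_eq_target_iff e x

theorem isTripleBisection_image_iff (A : Set (Arr Ob)) :
    IsTripleBisection (φ.toEquiv '' A) ↔ IsLocalBisection A := by
  simp only [IsTripleBisection, IsLocalBisection, Set.InjOn, Set.forall_mem_image,
    ← φ.source_eq_iff, ← φ.target_eq_iff, φ.toEquiv.apply_eq_iff_eq]
  grind

theorem image_setMul (A B : Set (Arr Ob)) :
    φ.toEquiv '' setMul A B = tripleMul (φ.toEquiv '' A) (φ.toEquiv '' B) := by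
  ext r
  obtain ⟨z, rfl⟩ := φ.toEquiv.surjective r
  rw [φ.toEquiv.injective.mem_set_image]
  simp only [setMul, tripleMul, Set.mem_ofPred_eq, Set.exists_mem_image, φ.isComp_iff,
    Equiv.toFun_as_coe]

/-- The isomorphism of `K_fin` with rook matrices induced by coordinates: a finite local bisection
`A` is sent to the matrix with graph `φ(A)`. -/
noncomputable def kfinEquivRook : Kfin Ob ≃ {M : X → X → WithZero G // IsRook M} :=
  ((Equiv.Set.congr φ.toEquiv).subtypeEquiv fun A =>
    and_congr (Set.finite_image_iff φ.toEquiv.injective.injOn).symm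
      (φ.isTripleBisection_image_iff A).symm).trans tripleBisectionEquivRook

theorem graph_kfinEquivRook (A : Kfin Ob) :
    graph (φ.kfinEquivRook A).val = φ.toEquiv '' A.val :=
  ((φ.isTripleBisection_image_iff A.val).2 A.2.2).graph_matrixOfGraph

theorem kfinEquivRook_setMul (A B C : Kfin Ob) (hC : C.val = setMul A.val B.val) :
    (φ.kfinEquivRook C).val = rookMul (φ.kfinEquivRook A).val (φ.kfinEquivRook B).val := by
  have row_subsingleton := injOn_target_graph_iff.1
    (isRook_iff_graph.1 (φ.kfinEquivRook A).2).2.2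
  apply graph_injective
  rw [graph_rookMul row_subsingleton, graph_kfinEquivRook, graph_kfinEquivRook,
    graph_kfinEquivRook, hC, image_setMul]

end TripleIso

/-- A connected discrete groupoid `𝒢` is isomorphic to `X × G × X` for some group
`G` and nonempty set `X`, and `K_fin(𝒢)` is isomorphic to the Boolean inverse
semigroup `M_{|X|}(G⁰)` of `|X| × |X|` generalized rook matrices over `G⁰`. -/
theorem connected_groupoid_Kfin_iso_rook (Ob : Type u) [Groupoid.{v} Ob]
    [Nonempty Ob] (hconn : ∀ a b : Ob, Nonempty (a ⟶ b)) :
    ∃ (G : Type (max u v)) (_ : Group G) (X : Type (max u v)) (_ : Nonempty X)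
      (φ : Arr Ob → X × G × X),
      Function.Bijective φ ∧
      (∀ x y z : Arr Ob, IsComp x y z ↔ tripleComp (φ x) (φ y) (φ z)) ∧
      ∃ Φ : Kfin Ob → {M : X → X → WithZero G // IsRook M},
        Function.Bijective Φ ∧
        (∀ A B : Kfin Ob, ∃ C : Kfin Ob, C.val = setMul A.val B.val) ∧
        (∀ A B C : Kfin Ob, C.val = setMul A.val B.val →
          (Φ C).val = rookMul (Φ A).val (Φ B).val) := by
  obtain ⟨o⟩ := ‹Nonempty Ob›
  let φ : TripleIso Ob (ULift.{v} Ob) (ULift.{u} (End o)) :=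
    (TripleIso.ofPaths fun a => (hconn o a).some).congr Equiv.ulift.symm MulEquiv.ulift.symm
  exact ⟨ULift.{u} (End o), inferInstance, ULift.{v} Ob, ⟨⟨o⟩⟩, φ.toEquiv, φ.toEquiv.bijective,
    φ.isComp_iff, φ.kfinEquivRook, φ.kfinEquivRook.bijective, exists_kfin_val_eq_setMul,
    φ.kfinEquivRook_setMul⟩

end Paper
end
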